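/- arXiv:0912.1518 — 2 statements merged into one kernel-verified Lean document; each statement's English description precedes it below -/
import Mathlib

section
/- Let l_1, m_1 be positive integers with l_1 ≤ m_1. Then the number of subsets X of [l_1,m_1] such that l_1 ∈ X and gcd(X) = 1 equals Σ_{d | l_1} μ(d) · 2^{⌊m_1/d⌋ − l_1/d}. -/
/-!
The gcd of a set containing `l` divides `l`, so the indicator of `gcd X = 1` is the sum of `μ d`
over those divisors `d` of `l` that divide every element of `X`. Exchanging the two summations
reduces the count to the sets `X` all of whose elements are multiples of a fixed `d`. These form
the Boolean interval between `{l}` and the set of all multiples of `d` in the ground set.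
-/

open Finset
open ArithmeticFunction (moebius)

theorem sum_moebius_divisors_filter_dvd {n k : ℕ} (hn : n ≠ 0) (hk : k ∣ n) :
    ∑ d ∈ n.divisors with d ∣ k, moebius d = if k = 1 then 1 else 0 := by
  rw [Nat.divisors_filter_dvd_of_dvd hn hk, ← ArithmeticFunction.coe_mul_zeta_apply,
    ArithmeticFunction.moebius_mul_coe_zeta, ArithmeticFunction.one_apply]

theorem card_filter_eq_one_eq_sum_moebius {ι : Type*} (s : Finset ι) (g : ι → ℕ) {n : ℕ}
    (hn : n ≠ 0) (hg : ∀ i ∈ s, g i ∣ n) :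
    (#{i ∈ s | g i = 1} : ℤ) = ∑ d ∈ n.divisors, moebius d * #{i ∈ s | d ∣ g i} := by
  calc (#{i ∈ s | g i = 1} : ℤ)
      = ∑ i ∈ s, ∑ d ∈ n.divisors, if d ∣ g i then moebius d else 0 := by
        rw [natCast_card_filter]
        refine sum_congr rfl fun i hi => ?_
        rw [← sum_filter, sum_moebius_divisors_filter_dvd hn (hg i hi)]
    _ = ∑ d ∈ n.divisors, moebius d * #{i ∈ s | d ∣ g i} := by
        rw [sum_comm]
        simp only [← sum_filter, sum_const, nsmul_eq_mul, mul_comm]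

section BooleanInterval

variable {ι α : Type*} [DecidableEq ι] [CommMonoidWithZero α] [NormalizedGCDMonoid α]
  [DecidableRel (α := α) (· ∣ ·)]

theorem filter_powerset_mem_dvd_gcd_eq_Icc (s : Finset ι) (f : ι → α) (i : ι) (d : α) :
    {t ∈ s.powerset | i ∈ t ∧ d ∣ t.gcd f} = Icc {i} {j ∈ s | d ∣ f j} := by
  ext t
  simp only [mem_filter, mem_powerset, mem_Icc, subset_iff, mem_singleton, forall_eq,
    Finset.dvd_gcd_iff, imp_and, forall_and, and_left_comm]

theorem card_filter_powerset_mem_dvd_gcd {s : Finset ι} {f : ι → α} {i : ι} {d : α}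
    (hi : i ∈ s) (hd : d ∣ f i) :
    #{t ∈ s.powerset | i ∈ t ∧ d ∣ t.gcd f} = 2 ^ #{j ∈ s.erase i | d ∣ f j} := by
  have mem_multiples : i ∈ {j ∈ s | d ∣ f j} := mem_filter.2 ⟨hi, hd⟩
  rw [filter_powerset_mem_dvd_gcd_eq_Icc, card_Icc_finset (singleton_subset_iff.2 mem_multiples),
    card_singleton, filter_erase, card_erase_of_mem mem_multiples]

end BooleanInterval

theorem card_Ioc_filter_dvd (l m d : ℕ) : #{x ∈ Ioc l m | d ∣ x} = m / d - l / d := by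
  rcases le_total m l with hml | hlm
  · rw [Ioc_eq_empty_of_le hml, filter_empty, card_empty,
      Nat.sub_eq_zero_of_le (Nat.div_le_div_right hml)]
  · have disjoint_parts : Disjoint {x ∈ Ioc 0 l | d ∣ x} {x ∈ Ioc l m | d ∣ x} :=
      disjoint_filter_filter (Ioc_disjoint_Ioc_of_le le_rfl)
    have card_add : l / d + #{x ∈ Ioc l m | d ∣ x} = m / d := by
      rw [← Nat.Ioc_filter_dvd_card_eq_div l d, ← Nat.Ioc_filter_dvd_card_eq_div m d,
        ← card_union_of_disjoint disjoint_parts, ← filter_union, Ioc_union_Ioc_eq_Ioc l.zero_le hlm]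
    exact Nat.eq_sub_of_add_eq' card_add

theorem stmt_3_general {ι : Type*} [DecidableEq ι] {s : Finset ι} {f : ι → ℕ} {i : ι}
    (hi : i ∈ s) (hfi : f i ≠ 0) :
    (#{t ∈ s.powerset | i ∈ t ∧ t.gcd f = 1} : ℤ) =
      ∑ d ∈ (f i).divisors, moebius d * 2 ^ #{j ∈ s.erase i | d ∣ f j} := by
  rw [← filter_filter, card_filter_eq_one_eq_sum_moebius _ _ hfi
    fun t ht => gcd_dvd (mem_filter.1 ht).2]
  refine sum_congr rfl fun d hd => ?_
  rw [filter_filter, card_filter_powerset_mem_dvd_gcd hi (Nat.dvd_of_mem_divisors hd)]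
  norm_cast

/-- Lemma 2(a): the number of relatively prime subsets of `[l₁,m₁]`
containing `l₁` equals `∑_{d ∣ l₁} μ(d) 2^{⌊m₁/d⌋ - l₁/d}`. -/
theorem stmt_3 (l₁ m₁ : ℕ) (hl₁ : 0 < l₁) (h : l₁ ≤ m₁) :
    ((((Finset.Icc l₁ m₁).powerset).filter
        (fun X : Finset ℕ => l₁ ∈ X ∧ X.gcd id = 1)).card : ℤ)
      = ∑ d ∈ l₁.divisors,
          (ArithmeticFunction.moebius d) * 2 ^ (m₁ / d - l₁ / d) := by
  rw [stmt_3_general (left_mem_Icc.2 h) hl₁.ne', Icc_erase_left]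
  simp only [id, card_Ioc_filter_dvd]
end

section
/- Let l_1, m_1, l_2, m_2 be positive integers with l_1 ≤ m_1 < l_2 ≤ m_2. Then f([l_1,m_1] ∪ [l_2,m_2]) = Σ_{d=1}^{m_2} μ(d) · (2^{⌊m_1/d⌋ + ⌊m_2/d⌋ − ⌊(l_1−1)/d⌋ − ⌊(l_2−1)/d⌋} − 1). -/
/-!
For a finite set `S` of positive integers, Möbius inversion on `X.gcd id` counts the nonempty
`X ⊆ S` of gcd one as `∑ d, μ d * #{∅ ≠ X ⊆ S | d ∣ X.gcd id}`. Since `d` divides the gcd of `X`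
exactly when `X` consists of multiples of `d`, the inner count is `2 ^ k - 1`, where `k` is the
number of multiples of `d` in `S`.
-/

open Finset
open scoped ArithmeticFunction.Moebius

theorem sum_divisors_moebius (n : ℕ) : ∑ d ∈ n.divisors, μ d = if n = 1 then 1 else 0 := by
  rw [← ArithmeticFunction.coe_mul_zeta_apply, ArithmeticFunction.moebius_mul_coe_zeta,
    ArithmeticFunction.one_apply]

theorem filter_dvd_Icc_one_eq_divisors {n N : ℕ} (hn : n ∈ Icc 1 N) :
    {d ∈ Icc 1 N | d ∣ n} = n.divisors := by
  obtain ⟨hn_pos, hnN⟩ := mem_Icc.mp hn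
  ext d
  simp only [mem_filter, mem_Icc, Nat.mem_divisors]
  constructor
  · rintro ⟨-, hd⟩
    exact ⟨hd, by lia⟩
  · rintro ⟨hd, -⟩
    exact ⟨⟨Nat.pos_of_dvd_of_pos hd hn_pos, (Nat.le_of_dvd hn_pos hd).trans hnN⟩, hd⟩

theorem card_filter_eq_one_eq_sum_moebius_mul_card_filter_dvd {ι : Type*} {s : Finset ι}
    {g : ι → ℕ} {N : ℕ} (hg : ∀ i ∈ s, g i ∈ Icc 1 N) :
    (#{i ∈ s | g i = 1} : ℤ) = ∑ d ∈ Icc 1 N, μ d * #{i ∈ s | d ∣ g i} := by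
  calc (#{i ∈ s | g i = 1} : ℤ)
      = ∑ i ∈ s, if g i = 1 then 1 else 0 := natCast_card_filter _ _
    _ = ∑ i ∈ s, ∑ d ∈ Icc 1 N, if d ∣ g i then μ d else 0 := by
        refine sum_congr rfl fun i hi ↦ ?_
        rw [← sum_divisors_moebius, ← filter_dvd_Icc_one_eq_divisors (hg i hi), sum_filter]
    _ = ∑ d ∈ Icc 1 N, ∑ i ∈ s, if d ∣ g i then μ d else 0 := sum_comm
    _ = ∑ d ∈ Icc 1 N, μ d * #{i ∈ s | d ∣ g i} := by
        refine sum_congr rfl fun d _ ↦ ?_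
        rw [← sum_filter, sum_const, nsmul_eq_mul, mul_comm]

theorem card_filter_powerset_nonempty_dvd_gcd {ι α : Type*} [CommMonoidWithZero α]
    [NormalizedGCDMonoid α] [DecidableRel fun a b : α ↦ a ∣ b] (s : Finset ι) (f : ι → α) (d : α) :
    #{X ∈ s.powerset | X.Nonempty ∧ d ∣ X.gcd f} = 2 ^ #{i ∈ s | d ∣ f i} - 1 := by
  classical
  have subsets_eq : {X ∈ s.powerset | X.Nonempty ∧ d ∣ X.gcd f} =
      {i ∈ s | d ∣ f i}.powerset.erase ∅ := by
    ext X
    simp only [mem_filter, mem_powerset, mem_erase, nonempty_iff_ne_empty,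
      Finset.dvd_gcd_iff, subset_iff, forall_and]
    tauto
  rw [subsets_eq, card_erase_of_mem (empty_mem_powerset _), card_powerset]

theorem gcd_mem_Icc_one {ι : Type*} {X : Finset ι} {f : ι → ℕ} {N : ℕ} (hX : X.Nonempty)
    (hf : ∀ i ∈ X, f i ∈ Icc 1 N) : X.gcd f ∈ Icc 1 N := by
  obtain ⟨i, hi⟩ := hX
  obtain ⟨hi_pos, hiN⟩ := mem_Icc.mp (hf i hi)
  have hdvd : X.gcd f ∣ f i := gcd_dvd hi
  exact mem_Icc.mpr ⟨Nat.pos_of_dvd_of_pos hdvd hi_pos, (Nat.le_of_dvd hi_pos hdvd).trans hiN⟩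

theorem card_filter_powerset_nonempty_gcd_eq_one {ι : Type*} {s : Finset ι} {f : ι → ℕ} {N : ℕ}
    (hf : ∀ i ∈ s, f i ∈ Icc 1 N) :
    (#{X ∈ s.powerset | X.Nonempty ∧ X.gcd f = 1} : ℤ) =
      ∑ d ∈ Icc 1 N, μ d * (2 ^ #{i ∈ s | d ∣ f i} - 1) := by
  have gcd_mem : ∀ X ∈ s.powerset.filter Finset.Nonempty, X.gcd f ∈ Icc 1 N := fun X hX ↦ by
    obtain ⟨hXs, hX_nonempty⟩ := mem_filter.mp hX
    exact gcd_mem_Icc_one hX_nonempty fun i hi ↦ hf i (mem_powerset.mp hXs hi)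
  rw [← filter_filter, card_filter_eq_one_eq_sum_moebius_mul_card_filter_dvd gcd_mem]
  refine sum_congr rfl fun d _ ↦ ?_
  rw [filter_filter, card_filter_powerset_nonempty_dvd_gcd, Nat.cast_sub Nat.one_le_two_pow]
  norm_cast

theorem card_filter_dvd_Ioc (a b d : ℕ) : #{x ∈ Ioc a b | d ∣ x} = b / d - a / d := by
  obtain hab | hba := le_total a b
  · have disjoint_Ioc : Disjoint {x ∈ Ioc 0 a | d ∣ x} {x ∈ Ioc a b | d ∣ x} :=
      disjoint_filter_filter (Ioc_disjoint_Ioc_of_le le_rfl)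
    rw [← Nat.Ioc_filter_dvd_card_eq_div b, ← Nat.Ioc_filter_dvd_card_eq_div a,
      ← Ioc_union_Ioc_eq_Ioc a.zero_le hab, filter_union, card_union_of_disjoint disjoint_Ioc,
      Nat.add_sub_cancel_left]
  · rw [Ioc_eq_empty_of_le hba, filter_empty, card_empty,
      Nat.sub_eq_zero_of_le (Nat.div_le_div_right hba)]

theorem card_filter_dvd_Icc {l : ℕ} (hl : 0 < l) (m d : ℕ) :
    #{x ∈ Icc l m | d ∣ x} = m / d - (l - 1) / d := by
  rw [← card_filter_dvd_Ioc, ← Nat.pred_eq_sub_one, ← Nat.pred_eq_pred,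
    Ioc_pred_left_eq_Icc_of_not_isMin (not_isMin_of_lt hl)]

theorem card_filter_dvd_Icc_union_Icc {l₁ m₁ l₂ m₂ : ℕ} (hl₁ : 0 < l₁) (h₁ : l₁ ≤ m₁)
    (h₂ : m₁ < l₂) (h₃ : l₂ ≤ m₂) (d : ℕ) :
    #{x ∈ Icc l₁ m₁ ∪ Icc l₂ m₂ | d ∣ x} =
      m₁ / d + m₂ / d - (l₁ - 1) / d - (l₂ - 1) / d := by
  have disjoint_Icc : Disjoint (Icc l₁ m₁) (Icc l₂ m₂) :=
    disjoint_left.mpr fun x hx₁ hx₂ ↦ by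
      rw [mem_Icc] at hx₁ hx₂
      lia
  have div_le₁ : (l₁ - 1) / d ≤ m₁ / d := Nat.div_le_div_right (by lia)
  have div_le₂ : (l₂ - 1) / d ≤ m₂ / d := Nat.div_le_div_right (by lia)
  rw [filter_union, card_union_of_disjoint (disjoint_filter_filter disjoint_Icc),
    card_filter_dvd_Icc hl₁, card_filter_dvd_Icc (by lia)]
  lia

/-- Main theorem (a): `f([l₁,m₁] ∪ [l₂,m₂]) =
∑_{d=1}^{m₂} μ(d) (2^{⌊m₁/d⌋ + ⌊m₂/d⌋ - ⌊(l₁-1)/d⌋ - ⌊(l₂-1)/d⌋} - 1)`, where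
`f(A)` counts the nonempty relatively prime subsets of `A`. -/
theorem stmt_9 (l₁ m₁ l₂ m₂ : ℕ) (hl₁ : 0 < l₁)
    (h₁ : l₁ ≤ m₁) (h₂ : m₁ < l₂) (h₃ : l₂ ≤ m₂) :
    ((((Finset.Icc l₁ m₁ ∪ Finset.Icc l₂ m₂).powerset).filter
        (fun X : Finset ℕ => X.Nonempty ∧ X.gcd id = 1)).card : ℤ)
      = ∑ d ∈ Finset.Icc 1 m₂,
          (ArithmeticFunction.moebius d) *
            (2 ^ (m₁ / d + m₂ / d - (l₁ - 1) / d - (l₂ - 1) / d) - 1) := by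
  have union_subset_Icc : ∀ x ∈ Icc l₁ m₁ ∪ Icc l₂ m₂, id x ∈ Icc 1 m₂ := fun x hx ↦ by
    simp only [mem_union, mem_Icc, id] at hx ⊢
    lia
  rw [card_filter_powerset_nonempty_gcd_eq_one union_subset_Icc]
  refine sum_congr rfl fun d _ ↦ ?_
  simp only [id, card_filter_dvd_Icc_union_Icc hl₁ h₁ h₂ h₃]
end
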